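/- Let (L_1, L_2, G) be a pseudo-fibered triple and ℓ a leaf of L_1 with endpoints {u,v}. Then for each g ∈ G, either both u and v are fixed points of g, or neither is. -/

import Mathlib

/-!
Suppose `g` fixes `u` but moves the other endpoint `v`; passing to `g⁻¹` if necessary, `g v` comes
after `v` in the line obtained by removing `u` from the circle. Let `F` be the set of points joined
to `u` by a leaf of `L₁`. It is closed in this line, it is invariant under `g`, and it contains `v`
and `g v`.

If `F` misses a point between `v` and `g v`, there are consecutive points `x < y` of `F` with
`v ≤ x < y ≤ g v` (`exists_consec`). No leaf has points of `{u, x, y}` on both sides, so the maximal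
intervals of `L₁` avoiding `u, x, y` form a non-leaf gap with `u, x, y` among its vertices
(`Consec.gap`). Its translate by `g` is the analogous gap for `u, g x, g y`. Both have the vertex
`u`, so by looseness they are equal. But `g x ≥ g v ≥ y > x`, so the vertex `x` of the first gap lies
inside the interval from `u` to `g x`, which avoids all vertices of the second
(`Consec.not_lt`), a contradiction.

Hence every point between `v` and `g v` is an endpoint of `L₁`, and therefore not of `L₂`. But a very
full lamination system has endpoints in every arc (`exists_endpoint_mem`): if an arc contained none,
no leaf would have points of it on both sides, and the maximal intervals avoiding it would form a
gap with infinitely many vertices.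

Both gaps come from one construction, `isGap_maxAvoid`. The cyclic order is handled through
stereographic coordinates (`crd`, `pt`) based at a suitable point. If instead `g` fixes `v`, the
same argument applies to the dual interval.
-/

open Set Topology

noncomputable section

/-- Stereographic projection from `1 ∈ S¹`. -/
def sproj (z : Circle) : ℝ := (z : ℂ).im / ((z : ℂ).re - 1)

/-- `(a,b,c)` is a positively oriented triple on `S¹`. -/
def posOri (a b c : Circle) : Prop :=
  a ≠ b ∧ b ≠ c ∧ c ≠ a ∧ sproj (a⁻¹ * b) < sproj (a⁻¹ * c)

/-- The nondegenerate open interval `(u,v)` on `S¹`. -/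
def oInt (u v : Circle) : Set Circle := {p | posOri u p v}

/-- `I` is a nondegenerate open interval on `S¹`. -/
def IsND (I : Set Circle) : Prop := ∃ u v : Circle, u ≠ v ∧ I = oInt u v

/-- The dual interval `I* = (v,u)` of `I = (u,v)`, i.e. the interior of the complement. -/
def dual (I : Set Circle) : Set Circle := interior Iᶜ

/-- The leaf `{I, I*}` lies on `J`. -/
def LiesOn (I J : Set Circle) : Prop := I ⊆ J ∨ dual I ⊆ J

/-- A lamination system on `S¹`. -/
structure LamSys (L : Set (Set Circle)) : Prop where
  nonempty : L.Nonempty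
  nd : ∀ I ∈ L, IsND I
  dualMem : ∀ I ∈ L, dual I ∈ L
  unlinked : ∀ I ∈ L, ∀ J ∈ L, LiesOn I J ∨ LiesOn I (dual J)
  chainUnion : ∀ f : ℕ → Set Circle, (∀ n, f n ∈ L) → (∀ n, f n ⊆ f (n + 1)) →
    IsND (⋃ n, f n) → (⋃ n, f n) ∈ L

/-- The leaf associated to an interval. -/
def leafOf (I : Set Circle) : Set (Set Circle) := {I, dual I}

/-- `liminf` of a sequence of sets. -/
def sLiminf (f : ℕ → Set Circle) : Set Circle := ⋃ k, ⋂ n, ⋂ (_ : k ≤ n), f n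

/-- `limsup` of a sequence of sets. -/
def sLimsup (f : ℕ → Set Circle) : Set Circle := ⋂ k, ⋃ n, ⋃ (_ : k ≤ n), f n

/-- The sequence of intervals converges to `J`. -/
def ConvTo (f : ℕ → Set Circle) (J : Set Circle) : Prop :=
  J ⊆ sLiminf f ∧ sLiminf f ⊆ sLimsup f ∧ sLimsup f ⊆ closure J

/-- A gap of a lamination system. -/
def IsGap (L G : Set (Set Circle)) : Prop :=
  G ⊆ L ∧ (∀ I ∈ G, ∀ J ∈ G, I ≠ J → I ∩ J = ∅) ∧ ∀ I ∈ L, ∃ J ∈ G, LiesOn I J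

/-- A gap which is a leaf. -/
def IsLeafGap (G : Set (Set Circle)) : Prop := ∃ I, G = leafOf I

/-- The vertex (endpoint) set of a gap. -/
def vset (G : Set (Set Circle)) : Set Circle := (⋃₀ G)ᶜ

/-- A very full lamination system: every gap is an ideal polygon (finite vertex set). -/
def VeryFull (L : Set (Set Circle)) : Prop := ∀ G, IsGap L G → (vset G).Finite

/-- The set of endpoints of leaves of `L`. -/
def ELset (L : Set (Set Circle)) : Set Circle := ⋃ I ∈ L, frontier I

/-- A rainbow at `p`. -/
def Rainbow (L : Set (Set Circle)) (p : Circle) (f : ℕ → Set Circle) : Prop :=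
  (∀ n, f n ∈ L) ∧ (∀ n, f (n + 1) ⊆ f n) ∧ (⋂ n, f n) = {p}

/-- An `I`-side sequence of leaves. -/
def SideSeq (L : Set (Set Circle)) (I : Set Circle) (f : ℕ → Set Circle) : Prop :=
  (∀ n, f n ∈ L) ∧ (∀ n, I ∉ leafOf (f n)) ∧ (∀ n, LiesOn (f n) I) ∧ ConvTo f I

/-- `I` is isolated in `L`. -/
def IsolatedInt (L : Set (Set Circle)) (I : Set Circle) : Prop := ∀ f, ¬ SideSeq L I f

/-- `C_p^I`. -/
def Cset (L : Set (Set Circle)) (p : Circle) (I : Set Circle) : Set (Set Circle) :=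
  {J ∈ L | p ∈ J ∧ J ⊆ I}

/-- The group of self-homeomorphisms of the circle (composition as multiplication). -/
instance : Group (Circle ≃ₜ Circle) where
  mul g h := h.trans g
  one := Homeomorph.refl _
  inv := Homeomorph.symm
  mul_assoc _ _ _ := Homeomorph.ext fun _ => rfl
  one_mul _ := Homeomorph.ext fun _ => rfl
  mul_one _ := Homeomorph.ext fun _ => rfl
  inv_mul_cancel g := Homeomorph.ext fun x => g.symm_apply_apply x

/-- An orientation-preserving homeomorphism of the circle. -/
def OrientPres (g : Circle ≃ₜ Circle) : Prop :=
  ∀ a b c, posOri a b c → posOri (g a) (g b) (g c)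

/-- `L` is invariant under a subgroup `G` of homeomorphisms. -/
def GInv (G : Subgroup (Circle ≃ₜ Circle)) (L : Set (Set Circle)) : Prop :=
  ∀ g ∈ G, ∀ I ∈ L, (⇑g) '' I ∈ L

/-- The image of a gap under a homeomorphism. -/
def gapIm (g : Circle ≃ₜ Circle) (P : Set (Set Circle)) : Set (Set Circle) :=
  (fun I => (⇑g) '' I) '' P

/-- `v_G(P)`, the union of the vertex sets of the `G`-orbit of the gap `P`. -/
def vOrb (G : Subgroup (Circle ≃ₜ Circle)) (P : Set (Set Circle)) : Set Circle :=
  ⋃ g ∈ G, vset (gapIm g P)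

/-- A loose lamination system: distinct non-leaf gaps have disjoint vertex sets. -/
def Loose (L : Set (Set Circle)) : Prop :=
  ∀ P Q, IsGap L P → IsGap L Q → ¬ IsLeafGap P → ¬ IsLeafGap Q → P ≠ Q →
    vset P ∩ vset Q = ∅

/-- A pseudo-fibered triple `(L₁, L₂, G)`. -/
structure PFib (L₁ L₂ : Set (Set Circle)) (G : Subgroup (Circle ≃ₜ Circle)) : Prop where
  orient : ∀ g ∈ G, OrientPres g
  fg : G.FG
  lam₁ : LamSys L₁
  lam₂ : LamSys L₂
  inv₁ : GInv G L₁
  inv₂ : GInv G L₂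
  veryFull₁ : VeryFull L₁
  veryFull₂ : VeryFull L₂
  loose₁ : Loose L₁
  loose₂ : Loose L₂
  disjEnds : ELset L₁ ∩ ELset L₂ = ∅

end

/-! ### Coordinates on the circle -/

/-- Twice the signed area of the triangle `a, b, c`. -/
noncomputable def triArea (a b c : Circle) : ℝ :=
  ((b : ℂ).re - (a : ℂ).re) * ((c : ℂ).im - (a : ℂ).im) -
    ((b : ℂ).im - (a : ℂ).im) * ((c : ℂ).re - (a : ℂ).re)

theorem circle_sq (z : Circle) : (z : ℂ).re ^ 2 + (z : ℂ).im ^ 2 = 1 := by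
  have h := Circle.normSq_coe z
  rw [Complex.normSq_apply] at h
  linarith

theorem re_lt_one {z : Circle} (hz : z ≠ 1) : (z : ℂ).re < 1 := by
  have h := circle_sq z
  by_contra hre
  have h1 : (z : ℂ).re = 1 := by nlinarith [sq_nonneg (z : ℂ).im]
  have h2 : (z : ℂ).im = 0 := by
    rw [h1] at h
    nlinarith
  exact hz (Circle.ext (Complex.ext (by simp [h1]) (by simp [h2])))

theorem sproj_lt_iff {z w : Circle} (hz : z ≠ 1) (hw : w ≠ 1) :
    sproj z < sproj w ↔ 0 < triArea 1 z w := by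
  have h1 := re_lt_one hz
  have h2 := re_lt_one hw
  unfold sproj triArea
  rw [← neg_div_neg_eq, ← neg_div_neg_eq (w : ℂ).im, div_lt_div_iff₀ (by linarith) (by linarith)]
  simp
  constructor <;> intro h <;> nlinarith

theorem triArea_mul (q a b c : Circle) :
    triArea (q * a) (q * b) (q * c) = triArea a b c := by
  have h := circle_sq q
  simp only [triArea, Circle.coe_mul, Complex.mul_re, Complex.mul_im]
  linear_combination ((((b : ℂ).re - (a : ℂ).re) * ((c : ℂ).im - (a : ℂ).im) -
    ((b : ℂ).im - (a : ℂ).im) * ((c : ℂ).re - (a : ℂ).re))) * h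

theorem triArea_rot (a b c : Circle) : triArea 1 (a⁻¹ * b) (a⁻¹ * c) = triArea a b c := by
  rw [← triArea_mul a 1, mul_one, mul_inv_cancel_left, mul_inv_cancel_left]

/-- Positive orientation is detected by the sign of the area of the triangle, which makes its cyclic
symmetry evident. -/
theorem posOri_iff (a b c : Circle) : posOri a b c ↔ 0 < triArea a b c := by
  constructor
  · rintro ⟨h1, -, h3, h⟩
    rwa [sproj_lt_iff, triArea_rot] at h
    · simpa [inv_mul_eq_one] using h1
    · simpa [inv_mul_eq_one] using h3.symm
  · intro h
    have h1 : a ≠ b := by rintro rfl; simp [triArea] at h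
    have h2 : b ≠ c := by rintro rfl; simp [triArea, mul_comm] at h
    have h3 : c ≠ a := by rintro rfl; simp [triArea] at h
    refine ⟨h1, h2, h3, ?_⟩
    rw [sproj_lt_iff, triArea_rot]
    · exact h
    · simpa [inv_mul_eq_one] using h1
    · simpa [inv_mul_eq_one] using h3.symm

theorem posOri_rot {a b c : Circle} (h : posOri a b c) : posOri b c a := by
  rw [posOri_iff] at *
  unfold triArea at *
  linarith

theorem posOri_asymm {a b c : Circle} (h : posOri a b c) : ¬ posOri c b a := by
  rw [posOri_iff] at *
  unfold triArea at *
  linarith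

/-- The stereographic coordinate on the circle with base point `q` at infinity. Its value `0`
at `q` itself is meaningless. -/
noncomputable def crd (q z : Circle) : ℝ := sproj (q⁻¹ * z)

/-- The inverse of stereographic projection from `1`: `t ↦ (t - i) / (t + i)`. -/
noncomputable def pt1 (t : ℝ) : Circle :=
  Circle.ofConjDivSelf ((t : ℂ) + Complex.I) (by
    intro h
    have := congrArg Complex.im h
    simp at this)

theorem pt1_re (t : ℝ) : (pt1 t : ℂ).re = (t ^ 2 - 1) / (t ^ 2 + 1) := by
  simp [pt1, Complex.div_re, Complex.normSq_apply]
  field_simp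
  ring

theorem pt1_im (t : ℝ) : (pt1 t : ℂ).im = -2 * t / (t ^ 2 + 1) := by
  simp [pt1, Complex.div_im, Complex.normSq_apply]
  field_simp
  ring

/-- The point of the circle with coordinate `t` based at `q`. -/
noncomputable def pt (q : Circle) (t : ℝ) : Circle := q * pt1 t

theorem sproj_pt1 (t : ℝ) : sproj (pt1 t) = t := by
  have : t ^ 2 + 1 ≠ 0 := by positivity
  unfold sproj
  rw [pt1_re, pt1_im]
  have h : (t ^ 2 - 1) / (t ^ 2 + 1) - 1 = -2 / (t ^ 2 + 1) := by
    field_simp; ring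
  rw [h]
  field_simp

theorem pt1_sproj {z : Circle} (hz : z ≠ 1) : pt1 (sproj z) = z := by
  have h := circle_sq z
  have h1 := re_lt_one hz
  have h2 : (z : ℂ).re - 1 ≠ 0 := by linarith
  have h3 : sproj z ^ 2 + 1 = -2 / ((z : ℂ).re - 1) := by
    unfold sproj
    field_simp
    linarith
  refine Circle.ext (Complex.ext ?_ ?_)
  · rw [pt1_re, show sproj z ^ 2 - 1 = -2 / ((z : ℂ).re - 1) - 2 by linarith, h3]
    field_simp; ring
  · rw [pt1_im, h3]
    unfold sproj
    field_simp

theorem pt1_ne_one (t : ℝ) : pt1 t ≠ 1 := by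
  intro h
  have h1 := pt1_re t
  have : t ^ 2 + 1 ≠ 0 := by positivity
  rw [h] at h1
  simp at h1
  field_simp at h1
  linarith

theorem continuous_pt1 : Continuous pt1 := by
  refine Continuous.subtype_mk (Continuous.div ?_ ?_ ?_) _
  · exact Complex.continuous_conj.comp (by fun_prop)
  · fun_prop
  · intro t h
    have := congrArg Complex.im h
    simp at this

theorem continuous_circle_coe : Continuous fun z : Circle => (z : ℂ) :=
  continuous_subtype_val

theorem crd_pt (q : Circle) (t : ℝ) : crd q (pt q t) = t := by
  simp [crd, pt, sproj_pt1]

theorem pt_crd {q z : Circle} (h : z ≠ q) : pt q (crd q z) = z := by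
  rw [crd, pt, pt1_sproj, mul_inv_cancel_left]
  simpa [inv_mul_eq_one] using h.symm

theorem pt_ne (q : Circle) (t : ℝ) : pt q t ≠ q := by
  simpa [pt] using pt1_ne_one t

theorem continuous_pt (q : Circle) : Continuous (pt q) :=
  continuous_const.mul continuous_pt1

theorem crd_inj {q a b : Circle} (ha : a ≠ q) (hb : b ≠ q) (h : crd q a = crd q b) : a = b := by
  rw [← pt_crd ha, h, pt_crd hb]

theorem continuousOn_crd (q : Circle) : ContinuousOn (crd q) {q}ᶜ := by
  have h1 : Continuous fun z : Circle => ((q⁻¹ * z : Circle) : ℂ) :=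
    continuous_circle_coe.comp (continuous_const.mul continuous_id)
  have h2 : ContinuousOn (fun z : Circle => ((q⁻¹ * z : Circle) : ℂ).im /
      (((q⁻¹ * z : Circle) : ℂ).re - 1)) {q}ᶜ := by
    refine ContinuousOn.div (Complex.continuous_im.comp h1).continuousOn
      ((Complex.continuous_re.comp h1).sub continuous_const).continuousOn ?_
    intro z hz
    have : q⁻¹ * z ≠ 1 := by simpa [inv_mul_eq_one] using Ne.symm hz
    exact (sub_neg.2 (re_lt_one this)).ne
  exact h2

theorem posOri_base {q a b : Circle} (ha : a ≠ q) (hb : b ≠ q) :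
    posOri q a b ↔ crd q a < crd q b := by
  constructor
  · exact fun h => h.2.2.2
  · intro h
    refine ⟨ha.symm, ?_, hb, h⟩
    rintro rfl
    exact lt_irrefl _ h

theorem triArea_pt (q : Circle) (r s t : ℝ) :
    triArea (pt q r) (pt q s) (pt q t) =
      4 * ((s - r) * (t - s) * (t - r)) / ((r ^ 2 + 1) * (s ^ 2 + 1) * (t ^ 2 + 1)) := by
  unfold pt
  rw [triArea_mul]
  unfold triArea
  simp only [pt1_re, pt1_im]
  field_simp
  ring

/-- In the coordinate based at `q`, the arc between two finite points in increasing order is the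
open segment between them. -/
theorem posOri_crd {q a b p : Circle} (ha : a ≠ q) (hb : b ≠ q) (hab : crd q a < crd q b) :
    posOri a p b ↔ p ≠ q ∧ crd q a < crd q p ∧ crd q p < crd q b := by
  by_cases hp : p = q
  · subst hp
    simp only [ne_eq, not_true_eq_false, false_and, iff_false]
    intro h
    have h1 := (posOri_base hb ha).1 (posOri_rot h)
    exact lt_asymm hab h1
  · rw [posOri_iff]
    nth_rewrite 1 [← pt_crd ha, ← pt_crd hb, ← pt_crd hp]
    rw [triArea_pt]
    have h0 : 0 < (crd q a ^ 2 + 1) * (crd q p ^ 2 + 1) * (crd q b ^ 2 + 1) := by positivity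
    rw [div_pos_iff_of_pos_right h0]
    have h1 : 0 < crd q b - crd q a := by linarith
    constructor
    · intro h
      have h2 : 0 < (crd q p - crd q a) * (crd q b - crd q p) := by
        by_contra h3
        nlinarith
      rcases pos_and_pos_or_neg_and_neg_of_mul_pos h2 with h | h
      · exact ⟨hp, by linarith, by linarith⟩
      · linarith
    · rintro ⟨-, h2, h3⟩
      have h4 := mul_pos (mul_pos (sub_pos.2 h2) (sub_pos.2 h3)) h1
      linarith

/-! ### Open arcs -/

theorem oInt_eq_posOri {a b p : Circle} : p ∈ oInt a b ↔ posOri a p b := Iff.rfl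

theorem isOpen_oInt (a b : Circle) : IsOpen (oInt a b) := by
  have h : oInt a b = {p | 0 < triArea a p b} := by
    ext p
    exact posOri_iff a p b
  rw [h]
  have := continuous_circle_coe
  unfold triArea
  exact isOpen_lt continuous_const (by fun_prop)

theorem oInt_left (a b : Circle) : a ∉ oInt a b := fun h => h.1 rfl

theorem oInt_right (a b : Circle) : b ∉ oInt a b := fun h => h.2.1 rfl

theorem oInt_base {q b : Circle} (hb : b ≠ q) : oInt q b = pt q '' Iio (crd q b) := by
  ext p
  constructor
  · intro h
    have hp : p ≠ q := h.1.symm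
    exact ⟨crd q p, (posOri_base hp hb).1 h, pt_crd hp⟩
  · rintro ⟨t, ht, rfl⟩
    exact (posOri_base (pt_ne q t) hb).2 (by rwa [crd_pt])

theorem oInt_base' {q a : Circle} (ha : a ≠ q) : oInt a q = pt q '' Ioi (crd q a) := by
  ext p
  constructor
  · intro h
    have hp : p ≠ q := h.2.1
    exact ⟨crd q p, (posOri_base ha hp).1 (posOri_rot (posOri_rot h)), pt_crd hp⟩
  · rintro ⟨t, ht, rfl⟩
    exact posOri_rot ((posOri_base ha (pt_ne q t)).2 (by rwa [crd_pt]))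

theorem oInt_segment {q a b : Circle} (ha : a ≠ q) (hb : b ≠ q) (hab : crd q a < crd q b) :
    oInt a b = pt q '' Ioo (crd q a) (crd q b) := by
  ext p
  rw [oInt_eq_posOri, posOri_crd ha hb hab]
  constructor
  · rintro ⟨hp, h⟩
    exact ⟨crd q p, h, pt_crd hp⟩
  · rintro ⟨t, ht, rfl⟩
    refine ⟨pt_ne q t, ?_⟩
    rwa [crd_pt]

theorem isPreconnected_oInt {a b : Circle} (h : a ≠ b) : IsPreconnected (oInt a b) := by
  rw [oInt_base h.symm]
  exact isPreconnected_Iio.image _ (continuous_pt a).continuousOn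

theorem oInt_nonempty {a b : Circle} (h : a ≠ b) : (oInt a b).Nonempty := by
  rw [oInt_base h.symm]
  exact nonempty_Iio.image _

theorem right_mem_closure {a b : Circle} (h : a ≠ b) : b ∈ closure (oInt a b) := by
  rw [oInt_base h.symm]
  refine image_closure_subset_closure_image (continuous_pt a) ⟨crd a b, ?_, pt_crd h.symm⟩
  rw [closure_Iio]
  exact self_mem_Iic

theorem left_mem_closure {a b : Circle} (h : a ≠ b) : a ∈ closure (oInt a b) := by
  rw [oInt_base' h]
  refine image_closure_subset_closure_image (continuous_pt b) ⟨crd b a, ?_, pt_crd h⟩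
  rw [closure_Ioi]
  exact self_mem_Ici

/-- The complement of two distinct points is the union of the two arcs they bound. -/
theorem mem_arcs {a b : Circle} (h : a ≠ b) (p : Circle) :
    p = a ∨ p = b ∨ p ∈ oInt a b ∨ p ∈ oInt b a := by
  by_cases hpa : p = a
  · exact Or.inl hpa
  by_cases hpb : p = b
  · exact Or.inr (Or.inl hpb)
  rcases lt_trichotomy (crd a p) (crd a b) with h1 | h1 | h1
  · exact Or.inr (Or.inr (Or.inl ((posOri_base hpa h.symm).2 h1)))
  · exact absurd (crd_inj hpa h.symm h1) hpb
  · exact Or.inr (Or.inr (Or.inr (posOri_rot ((posOri_base h.symm hpa).2 h1))))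

theorem oInt_disj {a b p : Circle} (h : p ∈ oInt a b) : p ∉ oInt b a :=
  fun hpba => posOri_asymm h hpba

/-- The endpoints do not belong to the interior of the complement, being limits of the arc. -/
theorem dual_oInt {a b : Circle} (h : a ≠ b) : dual (oInt a b) = oInt b a := by
  apply subset_antisymm
  · intro p hp
    rw [dual, interior_compl] at hp
    rcases mem_arcs h p with rfl | rfl | h1 | h1
    · exact absurd (left_mem_closure h) hp
    · exact absurd (right_mem_closure h) hp
    · exact absurd (subset_closure h1) hp
    · exact h1
  · exact interior_maximal (fun p hp hp' => oInt_disj hp hp') (isOpen_oInt b a)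

theorem left_mem_frontier {a b : Circle} (h : a ≠ b) : a ∈ frontier (oInt a b) := by
  rw [(isOpen_oInt a b).frontier_eq]
  exact ⟨left_mem_closure h, oInt_left a b⟩

theorem right_mem_frontier {a b : Circle} (h : a ≠ b) : b ∈ frontier (oInt a b) := by
  rw [(isOpen_oInt a b).frontier_eq]
  exact ⟨right_mem_closure h, oInt_right a b⟩

/-- A nonempty open connected set omitting two points is a nondegenerate open arc: in the
coordinate based at one omitted point it is an open interval other than the whole line. -/
theorem isND_of_isPreconnected {U : Set Circle} (hU : IsOpen U) (hc : IsPreconnected U)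
    (hne : U.Nonempty) {q r : Circle} (hqr : r ≠ q) (hq : q ∉ U) (hr : r ∉ U) : IsND U := by
  have hsub : U ⊆ {q}ᶜ := fun z hz hzq => hq (hzq ▸ hz)
  have hS : IsPreconnected (crd q '' U) := hc.image _ ((continuousOn_crd q).mono hsub)
  have hpre : crd q '' U = pt q ⁻¹' U := by
    ext t
    constructor
    · rintro ⟨z, hz, rfl⟩
      rw [mem_preimage, pt_crd (hsub hz)]
      exact hz
    · intro ht
      exact ⟨pt q t, ht, crd_pt q t⟩
  have hUS : U = pt q '' (crd q '' U) := by
    rw [image_image]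
    ext z
    constructor
    · intro hz
      exact ⟨z, hz, pt_crd (hsub hz)⟩
    · rintro ⟨w, hw, rfl⟩
      simpa only [pt_crd (hsub hw)] using hw
  have hO : IsOpen (crd q '' U) := hpre ▸ hU.preimage (continuous_pt q)
  have hr' : crd q r ∉ crd q '' U := by
    rw [hpre, mem_preimage, pt_crd hqr]
    exact hr
  have hne' := hne.image (crd q)
  have hmem := hS.mem_intervals
  generalize crd q '' U = S at *
  have hint := hO.interior_eq
  have key : (∃ a b : ℝ, S = Ioo a b) ∨ (∃ a, S = Ioi a) ∨ (∃ b, S = Iio b) := by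
    simp only [mem_insert_iff, mem_singleton_iff] at hmem
    rcases hmem with h | h | h | h | h | h | h | h | h | h
    · rw [h, interior_Icc, ← h] at hint; exact Or.inl ⟨_, _, hint.symm⟩
    · rw [h, interior_Ico, ← h] at hint; exact Or.inl ⟨_, _, hint.symm⟩
    · rw [h, interior_Ioc, ← h] at hint; exact Or.inl ⟨_, _, hint.symm⟩
    · exact Or.inl ⟨_, _, h⟩
    · rw [h, interior_Ici, ← h] at hint; exact Or.inr (Or.inl ⟨_, hint.symm⟩)
    · exact Or.inr (Or.inl ⟨_, h⟩)
    · rw [h, interior_Iic, ← h] at hint; exact Or.inr (Or.inr ⟨_, hint.symm⟩)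
    · exact Or.inr (Or.inr ⟨_, h⟩)
    · exact absurd (h ▸ mem_univ _) hr'
    · exact absurd h hne'.ne_empty
  rcases key with ⟨a, b, rfl⟩ | ⟨a, rfl⟩ | ⟨b, rfl⟩
  · have hab : a < b := nonempty_Ioo.1 hne'
    refine ⟨pt q a, pt q b, fun h => hab.ne ?_, ?_⟩
    · rw [← crd_pt q a, h, crd_pt]
    · rw [oInt_segment (pt_ne q a) (pt_ne q b), crd_pt, crd_pt]
      · exact hUS
      · rwa [crd_pt, crd_pt]
  · refine ⟨pt q a, q, pt_ne q a, ?_⟩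
    rw [oInt_base' (pt_ne q a), crd_pt]
    exact hUS
  · refine ⟨q, pt q b, (pt_ne q b).symm, ?_⟩
    rw [oInt_base (pt_ne q b), crd_pt]
    exact hUS

theorem image_oInt {g : Circle ≃ₜ Circle} (h1 : OrientPres g) (h2 : OrientPres g.symm)
    (a b : Circle) : g '' oInt a b = oInt (g a) (g b) := by
  ext p
  constructor
  · rintro ⟨z, hz, rfl⟩
    exact h1 _ _ _ hz
  · intro hp
    refine ⟨g.symm p, ?_, g.apply_symm_apply p⟩
    have := h2 _ _ _ hp
    rwa [g.symm_apply_apply, g.symm_apply_apply] at this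

/-! ### Gaps carved out by a set of points -/

theorem dual_dual_of_mem {L : Set (Set Circle)} (hL : LamSys L) {I : Set Circle} (hI : I ∈ L) :
    dual (dual I) = I := by
  obtain ⟨a, b, hab, rfl⟩ := hL.nd I hI
  rw [dual_oInt hab, dual_oInt hab.symm]

theorem dual_anti {I J : Set Circle} (h : I ⊆ J) : dual J ⊆ dual I :=
  interior_mono (compl_subset_compl.2 h)

theorem dual_disj {I : Set Circle} : Disjoint I (dual I) :=
  disjoint_compl_right.mono_right interior_subset

/-- A set with three points cannot avoid both sides of a leaf, since only the two endpoints of the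
leaf lie on neither side. -/
theorem not_disjoint_both {L : Set (Set Circle)} (hL : LamSys L) {V : Set Circle}
    {x y z : Circle} (hx : x ∈ V) (hy : y ∈ V) (hz : z ∈ V) (hxy : x ≠ y) (hyz : y ≠ z)
    (hxz : x ≠ z) {I : Set Circle} (hI : I ∈ L) (h1 : Disjoint I V) (h2 : Disjoint (dual I) V) :
    False := by
  obtain ⟨a, b, hab, rfl⟩ := hL.nd I hI
  rw [dual_oInt hab] at h2
  have key : ∀ p ∈ V, p = a ∨ p = b := by
    intro p hp
    rcases mem_arcs hab p with h | h | h | h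
    · exact Or.inl h
    · exact Or.inr h
    · exact absurd hp (h1.notMem_of_mem_left h)
    · exact absurd hp (h2.notMem_of_mem_left h)
  rcases key x hx with rfl | rfl <;> rcases key y hy with rfl | rfl <;>
    rcases key z hz with rfl | rfl <;> simp_all

/-- Intervals of a lamination system avoiding a common set of at least three points are nested or
disjoint. -/
theorem nested_or_disjoint {L : Set (Set Circle)} (hL : LamSys L) {V : Set Circle}
    {x y z : Circle} (hx : x ∈ V) (hy : y ∈ V) (hz : z ∈ V) (hxy : x ≠ y) (hyz : y ≠ z)
    (hxz : x ≠ z) {I J : Set Circle} (hI : I ∈ L) (hJ : J ∈ L) (h1 : Disjoint I V)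
    (h2 : Disjoint J V) : I ⊆ J ∨ J ⊆ I ∨ Disjoint I J := by
  rcases hL.unlinked I hI J hJ with (h | h) | (h | h)
  · exact Or.inl h
  · exact (not_disjoint_both hL hx hy hz hxy hyz hxz hI h1 (h2.mono_left h)).elim
  · exact Or.inr (Or.inr (dual_disj.symm.mono_left h))
  · have := dual_anti h
    rw [dual_dual_of_mem hL hI, dual_dual_of_mem hL hJ] at this
    exact Or.inr (Or.inl this)

/-- The intervals of `L` that are maximal among those avoiding `V`. -/
def maxAvoid (L : Set (Set Circle)) (V : Set Circle) : Set (Set Circle) :=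
  {M | M ∈ L ∧ Disjoint M V ∧ ∀ J ∈ L, Disjoint J V → M ⊆ J → J = M}

/-- Each interval of `L` avoiding `V` lies in a maximal one, namely the union of all intervals of `L`
that avoid `V` and contain `I`. These form a chain, a countable subfamily has the same union, and
its partial unions are an increasing sequence in `L`. -/
theorem exists_maxAvoid {L : Set (Set Circle)} (hL : LamSys L) {V : Set Circle}
    {x y z : Circle} (hx : x ∈ V) (hy : y ∈ V) (hz : z ∈ V) (hxy : x ≠ y) (hyz : y ≠ z)
    (hxz : x ≠ z) {I : Set Circle} (hI : I ∈ L) (h1 : Disjoint I V) :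
    ∃ M ∈ maxAvoid L V, I ⊆ M := by
  have hne : ∀ J ∈ L, J.Nonempty := by
    intro J hJ
    obtain ⟨a, b, hab, rfl⟩ := hL.nd J hJ
    exact oInt_nonempty hab
  have hpre : ∀ J ∈ L, IsPreconnected J := by
    intro J hJ
    obtain ⟨a, b, hab, rfl⟩ := hL.nd J hJ
    exact isPreconnected_oInt hab
  have hop : ∀ J ∈ L, IsOpen J := by
    intro J hJ
    obtain ⟨a, b, hab, rfl⟩ := hL.nd J hJ
    exact isOpen_oInt a b
  obtain ⟨i, hi⟩ := hne I hI
  set S : Set (Set Circle) := {J | J ∈ L ∧ Disjoint J V ∧ I ⊆ J} with hS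
  have hIS : I ∈ S := ⟨hI, h1, subset_rfl⟩
  have hchain : ∀ J ∈ S, ∀ K ∈ S, J ⊆ K ∨ K ⊆ J := by
    rintro J ⟨hJ, hJV, hIJ⟩ K ⟨hK, hKV, hIK⟩
    rcases nested_or_disjoint hL hx hy hz hxy hyz hxz hJ hK hJV hKV with h | h | h
    · exact Or.inl h
    · exact Or.inr h
    · exact absurd (hIK hi) (h.notMem_of_mem_left (hIJ hi))
  obtain ⟨T, hTc, hTS, hTU⟩ :=
    TopologicalSpace.isOpen_sUnion_countable S fun J hJ => hop J hJ.1
  have hdisj : Disjoint (⋃₀ S) V := disjoint_sUnion_left.2 fun J hJ => hJ.2.1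
  have hIU : I ⊆ ⋃₀ S := subset_sUnion_of_mem hIS
  have hTne : T.Nonempty := by
    have : i ∈ ⋃₀ T := hTU ▸ hIU hi
    obtain ⟨J, hJ, -⟩ := this
    exact ⟨J, hJ⟩
  obtain ⟨f, rfl⟩ := hTc.exists_eq_range hTne
  have hfS : ∀ n, f n ∈ S := fun n => hTS (mem_range_self n)
  have hpS : ∀ n, partialSups f n ∈ S := by
    intro n
    induction n with
    | zero => simpa using hfS 0
    | succ n ih =>
      rw [partialSups_add_one]
      rcases hchain _ ih _ (hfS (n + 1)) with h | h
      · rw [sup_eq_right.2 h]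
        exact hfS _
      · rw [sup_eq_left.2 h]
        exact ih
  have hU : (⋃ n, partialSups f n) = ⋃₀ S := by
    rw [← hTU, sUnion_range]
    exact iSup_partialSups_eq f
  have hND : IsND (⋃₀ S) := by
    refine isND_of_isPreconnected (isOpen_sUnion fun J hJ => hop J hJ.1)
      (isPreconnected_sUnion i S (fun J hJ => hJ.2.2 hi) fun J hJ => hpre J hJ.1)
      ⟨i, hIU hi⟩ hxy (hdisj.notMem_of_mem_right hy) (hdisj.notMem_of_mem_right hx)
  have hmem : ⋃₀ S ∈ L := by
    have h := hL.chainUnion (fun n => partialSups f n) (fun n => (hpS n).1)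
      (fun n => (partialSups f).monotone n.le_succ)
    rw [hU] at h
    exact h hND
  refine ⟨⋃₀ S, ⟨hmem, hdisj, fun J hJ hJV hsub => ?_⟩, hIU⟩
  exact subset_antisymm (subset_sUnion_of_mem ⟨hJ, hJV, hIU.trans hsub⟩) hsub

/-- If no leaf of `L` has points of `V` on both sides, then the maximal intervals avoiding `V` form
a gap. -/
theorem isGap_maxAvoid {L : Set (Set Circle)} (hL : LamSys L) {V : Set Circle}
    {x y z : Circle} (hx : x ∈ V) (hy : y ∈ V) (hz : z ∈ V) (hxy : x ≠ y) (hyz : y ≠ z)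
    (hxz : x ≠ z) (hV : ∀ I ∈ L, Disjoint I V ∨ Disjoint (dual I) V) :
    IsGap L (maxAvoid L V) := by
  refine ⟨fun M hM => hM.1, ?_, ?_⟩
  · rintro M ⟨hM, hMV, hmax⟩ N ⟨hN, hNV, hmax'⟩ hne
    rcases nested_or_disjoint hL hx hy hz hxy hyz hxz hM hN hMV hNV with h | h | h
    · exact absurd (hmax N hN hNV h).symm hne
    · exact absurd (hmax' M hM hMV h) hne
    · exact disjoint_iff_inter_eq_empty.1 h
  · intro I hI
    rcases hV I hI with h | h
    · obtain ⟨M, hM, hIM⟩ := exists_maxAvoid hL hx hy hz hxy hyz hxz hI h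
      exact ⟨M, hM, Or.inl hIM⟩
    · obtain ⟨M, hM, hIM⟩ := exists_maxAvoid hL hx hy hz hxy hyz hxz (hL.dualMem I hI) h
      exact ⟨M, hM, Or.inr hIM⟩

theorem subset_vset_maxAvoid (L : Set (Set Circle)) (V : Set Circle) :
    V ⊆ vset (maxAvoid L V) := by
  rintro p hp ⟨M, hM, hpM⟩
  exact hM.2.1.notMem_of_mem_left hpM hp

/-- The maximal intervals avoiding three points do not form a leaf, as the points would have to lie
on neither side of it. -/
theorem not_isLeafGap_maxAvoid {L : Set (Set Circle)} (hL : LamSys L) {V : Set Circle}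
    {x y z : Circle} (hx : x ∈ V) (hy : y ∈ V) (hz : z ∈ V) (hxy : x ≠ y) (hyz : y ≠ z)
    (hxz : x ≠ z) : ¬ IsLeafGap (maxAvoid L V) := by
  rintro ⟨I, hI⟩
  have h1 : I ∈ maxAvoid L V := hI ▸ Or.inl rfl
  have h2 : dual I ∈ maxAvoid L V := hI ▸ Or.inr rfl
  exact not_disjoint_both hL hx hy hz hxy hyz hxz h1.1 h1.2.1 h2.2.1

/-! ### Leaves sharing an endpoint -/

/-- A very full lamination system has endpoints in every nondegenerate arc: otherwise the whole arc
would consist of vertices of a single gap. -/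
theorem exists_endpoint_mem {L : Set (Set Circle)} (hL : LamSys L) (hvf : VeryFull L)
    {a b : Circle} (hab : a ≠ b) : ∃ p ∈ oInt a b, p ∈ ELset L := by
  by_contra! hno
  have hinf : (oInt a b).Infinite := by
    rw [oInt_base hab.symm]
    refine (Iio_infinite _).image fun s _ t _ h => ?_
    rw [← crd_pt a s, h, crd_pt]
  obtain ⟨x, hx, y, hy, hxy⟩ := hinf.nontrivial
  obtain ⟨z, hz, hzn⟩ := (hinf.sdiff (toFinite {x, y})).nonempty
  have hzx : x ≠ z := fun h => hzn (Or.inl h.symm)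
  have hzy : y ≠ z := fun h => hzn (Or.inr h.symm)
  have hV : ∀ I ∈ L, Disjoint I (oInt a b) ∨ Disjoint (dual I) (oInt a b) := by
    intro I hI
    obtain ⟨c, d, hcd, rfl⟩ := hL.nd I hI
    rw [dual_oInt hcd]
    have hc : c ∉ oInt a b := fun h =>
      hno c h (mem_biUnion hI (left_mem_frontier hcd))
    have hd : d ∉ oInt a b := fun h =>
      hno d h (mem_biUnion hI (right_mem_frontier hcd))
    have hcov : oInt a b ⊆ oInt c d ∪ oInt d c := by
      intro p hp
      rcases mem_arcs hcd p with rfl | rfl | h | h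
      · exact absurd hp hc
      · exact absurd hp hd
      · exact Or.inl h
      · exact Or.inr h
    rcases (isPreconnected_oInt hab).subset_or_subset (isOpen_oInt c d) (isOpen_oInt d c)
      (disjoint_left.2 fun p hp => oInt_disj hp) hcov with h | h
    · exact Or.inr (disjoint_left.2 fun p hp hp' => oInt_disj hp (h hp'))
    · exact Or.inl (disjoint_left.2 fun p hp hp' => oInt_disj hp (h hp'))
  exact hinf ((hvf _ (isGap_maxAvoid hL hx hy hz hxy hzy hzx hV)).subset
    (subset_vset_maxAvoid L _))

/-- No leaf of `L` separates the endpoints of another leaf. -/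
theorem not_separated {L : Set (Set Circle)} (hL : LamSys L) {u x : Circle} (hux : u ≠ x)
    (hJ : oInt u x ∈ L) {I : Set Circle} (hI : I ∈ L) (hu : u ∈ I) (hx : x ∈ dual I) : False := by
  rcases hL.unlinked I hI _ hJ with (h | h) | (h | h)
  · exact oInt_left u x (h hu)
  · exact oInt_right u x (h hx)
  · rw [dual_oInt hux] at h
    exact oInt_right x u (h hu)
  · rw [dual_oInt hux] at h
    exact oInt_left x u (h hx)

/-- `x` and `y` are consecutive among the other endpoints of the leaves ending at `u`. -/
structure Consec (L : Set (Set Circle)) (u x y : Circle) : Prop where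
  left : oInt u x ∈ L
  right : oInt u y ∈ L
  pos : posOri u x y
  none : ∀ b, oInt u b ∈ L → posOri u x b → ¬ posOri u b y

/-- A leaf ending at `u` has no two of the points `u, x, y` strictly on opposite sides. -/
theorem Consec.disj_base {L : Set (Set Circle)} {u x y : Circle} (h : Consec L u x y)
    {b : Circle} (hub : u ≠ b) (hI : oInt u b ∈ L) :
    Disjoint (oInt u b) {u, x, y} ∨ Disjoint (oInt b u) {u, x, y} := by
  have hux : x ≠ u := h.pos.1.symm
  have huy : y ≠ u := h.pos.2.2.1
  have hxy := (posOri_base hux huy).1 h.pos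
  have hn := h.none b hI
  rw [posOri_base hux hub.symm, posOri_base hub.symm huy] at hn
  rcases le_or_gt (crd u b) (crd u x) with h1 | h1
  · left
    rw [disjoint_right]
    rintro p (rfl | rfl | rfl) hp
    · exact oInt_left _ _ hp
    · have := (posOri_base hux hub.symm).1 hp
      linarith
    · have := (posOri_base huy hub.symm).1 hp
      linarith
  · right
    have h2 := not_lt.1 (hn h1)
    rw [disjoint_right]
    rintro p (rfl | rfl | rfl) hp
    · exact oInt_right _ _ hp
    · have := (posOri_base hub.symm hux).1 (posOri_rot (posOri_rot hp))
      linarith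
    · have := (posOri_base hub.symm huy).1 (posOri_rot (posOri_rot hp))
      linarith

theorem Consec.disj {L : Set (Set Circle)} (hL : LamSys L) {u x y : Circle}
    (h : Consec L u x y) (I : Set Circle) (hI : I ∈ L) :
    Disjoint I {u, x, y} ∨ Disjoint (dual I) {u, x, y} := by
  have hux : u ≠ x := h.pos.1
  have huy : u ≠ y := h.pos.2.2.1.symm
  have hside : ∀ J ∈ L, u ∈ J → Disjoint (dual J) {u, x, y} := by
    intro J hJ hu
    rw [disjoint_right]
    rintro p (rfl | rfl | rfl) hp
    · exact dual_disj.notMem_of_mem_left hu hp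
    · exact not_separated hL hux h.left hJ hu hp
    · exact not_separated hL huy h.right hJ hu hp
  have hD := hL.dualMem I hI
  have hDD := dual_dual_of_mem hL hI
  obtain ⟨a, b, hab, rfl⟩ := hL.nd I hI
  rw [dual_oInt hab] at *
  rcases mem_arcs hab u with rfl | rfl | hu | hu
  · exact h.disj_base hab hI
  · exact (h.disj_base hab.symm hD).symm
  · have := hside _ hI hu
    rw [dual_oInt hab] at this
    exact Or.inr this
  · have := hside _ hD hu
    rw [hDD] at this
    exact Or.inl this

/-- Two consecutive leaves at `u` determine a non-leaf gap: the maximal intervals avoiding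
`u`, `x` and `y`. -/
theorem Consec.gap {L : Set (Set Circle)} (hL : LamSys L) {u x y : Circle}
    (h : Consec L u x y) :
    IsGap L (maxAvoid L {u, x, y}) ∧ ¬ IsLeafGap (maxAvoid L {u, x, y}) := by
  have hu : u ∈ ({u, x, y} : Set Circle) := by simp
  have hx : x ∈ ({u, x, y} : Set Circle) := by simp
  have hy : y ∈ ({u, x, y} : Set Circle) := by simp
  obtain ⟨h1, h2, h3, -⟩ := h.pos
  exact ⟨isGap_maxAvoid hL hu hx hy h1 h2 h3.symm (h.disj hL),
    not_isLeafGap_maxAvoid hL hu hx hy h1 h2 h3.symm⟩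

/-- In a loose lamination system the polygons cut out by two pairs of consecutive leaves at `u`
coincide, so the side of the second polygon starting at `u` cannot enclose a vertex of the first. -/
theorem Consec.not_lt {L : Set (Set Circle)} (hL : LamSys L) (hloose : Loose L)
    {u x y x' y' : Circle} (h : Consec L u x y) (h' : Consec L u x' y') : ¬ posOri u x x' := by
  intro hlt
  have heq : maxAvoid L {u, x, y} = maxAvoid L {u, x', y'} := by
    by_contra hne
    have := hloose _ _ (h.gap hL).1 (h'.gap hL).1 (h.gap hL).2 (h'.gap hL).2 hne
    have hu : u ∈ vset (maxAvoid L {u, x, y}) ∩ vset (maxAvoid L {u, x', y'}) :=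
      ⟨subset_vset_maxAvoid L _ (by simp), subset_vset_maxAvoid L _ (by simp)⟩
    rw [this] at hu
    exact hu
  obtain ⟨h1, h2, h3, -⟩ := h'.pos
  have hux' : x' ≠ u := h1.symm
  have hd : Disjoint (oInt u x') {u, x', y'} := by
    rw [disjoint_right]
    rintro p (rfl | rfl | rfl) hp
    · exact oInt_left _ _ hp
    · exact oInt_right _ _ hp
    · exact lt_asymm ((posOri_base h3 hux').1 hp) ((posOri_base hux' h3).1 h'.pos)
  obtain ⟨M, hM, hsub⟩ := exists_maxAvoid hL (V := {u, x', y'}) (x := u) (y := x') (z := y')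
    (by simp) (by simp) (by simp) h1 h2 h3.symm h'.left hd
  rw [← heq] at hM
  exact hM.2.1.notMem_of_mem_left (hsub hlt) (by simp)

/-- The other endpoints of leaves ending at `u` are closed under increasing limits. -/
theorem leaf_limit_left {L : Set (Set Circle)} (hL : LamSys L) (u : Circle) {s : ℕ → ℝ} {t : ℝ}
    (hs : ∀ n, oInt u (pt u (s n)) ∈ L) (hm : Monotone s) (hle : ∀ n, s n ≤ t)
    (ht : Filter.Tendsto s Filter.atTop (𝓝 t)) : oInt u (pt u t) ∈ L := by
  have hU : ⋃ n, oInt u (pt u (s n)) = oInt u (pt u t) := by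
    simp only [oInt_base (pt_ne u _), crd_pt]
    rw [← image_iUnion]
    congr 1
    ext r
    simp only [mem_iUnion, mem_Iio]
    constructor
    · rintro ⟨n, hn⟩
      exact hn.trans_le (hle n)
    · intro hr
      exact (ht.eventually (lt_mem_nhds hr)).exists
  rw [← hU]
  refine hL.chainUnion _ hs (fun n => ?_) ⟨u, pt u t, (pt_ne u t).symm, hU⟩
  simp only [oInt_base (pt_ne u _), crd_pt]
  exact image_mono (Iio_subset_Iio (hm n.le_succ))

/-- The other endpoints of leaves ending at `u` are closed under decreasing limits: here the dual
intervals increase. -/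
theorem leaf_limit_right {L : Set (Set Circle)} (hL : LamSys L) (u : Circle) {s : ℕ → ℝ} {t : ℝ}
    (hs : ∀ n, oInt u (pt u (s n)) ∈ L) (hm : Antitone s) (hle : ∀ n, t ≤ s n)
    (ht : Filter.Tendsto s Filter.atTop (𝓝 t)) : oInt u (pt u t) ∈ L := by
  have hU : ⋃ n, oInt (pt u (s n)) u = oInt (pt u t) u := by
    simp only [oInt_base' (pt_ne u _), crd_pt]
    rw [← image_iUnion]
    congr 1
    ext r
    simp only [mem_iUnion, mem_Ioi]
    constructor
    · rintro ⟨n, hn⟩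
      exact (hle n).trans_lt hn
    · intro hr
      exact (ht.eventually (gt_mem_nhds hr)).exists
  rw [← dual_oInt (pt_ne u t), ← hU]
  refine hL.dualMem _ (hL.chainUnion _ (fun n => ?_) (fun n => ?_) ⟨pt u t, u, pt_ne u t, hU⟩)
  · rw [← dual_oInt (pt_ne u _).symm]
    exact hL.dualMem _ (hs n)
  · simp only [oInt_base' (pt_ne u _), crd_pt]
    exact image_mono (Ioi_subset_Ioi (hm n.le_succ))

/-- Since the set of other endpoints of leaves ending at `u` is closed, a point between two such
endpoints that is not one itself lies between two consecutive ones. -/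
theorem exists_consec {L : Set (Set Circle)} (hL : LamSys L) {u v w p : Circle}
    (hv : oInt u v ∈ L) (hw : oInt u w ∈ L) (hvp : posOri u v p) (hpw : posOri u p w)
    (hp : oInt u p ∉ L) :
    ∃ x y, Consec L u x y ∧ crd u v ≤ crd u x ∧ crd u y ≤ crd u w := by
  have hvu : v ≠ u := hvp.1.symm
  have hpu : p ≠ u := hpw.1.symm
  have hwu : w ≠ u := hpw.2.2.1
  have hvp' := (posOri_base hvu hpu).1 hvp
  have hpw' := (posOri_base hpu hwu).1 hpw
  set F : Set ℝ := {t | oInt u (pt u t) ∈ L} with hF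
  have hvF : crd u v ∈ F := by rw [hF, mem_ofPred_eq, pt_crd hvu]; exact hv
  have hwF : crd u w ∈ F := by rw [hF, mem_ofPred_eq, pt_crd hwu]; exact hw
  have hpF : crd u p ∉ F := by rw [hF, mem_ofPred_eq, pt_crd hpu]; exact hp
  have hA : IsLUB (F ∩ Iic (crd u p)) (sSup (F ∩ Iic (crd u p))) :=
    isLUB_csSup ⟨_, hvF, hvp'.le⟩ ⟨crd u p, fun t ht => ht.2⟩
  have hB : IsGLB (F ∩ Ici (crd u p)) (sInf (F ∩ Ici (crd u p))) :=
    isGLB_csInf ⟨_, hwF, hpw'.le⟩ ⟨crd u p, fun t ht => ht.2⟩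
  generalize sSup (F ∩ Iic (crd u p)) = α at hA
  generalize sInf (F ∩ Ici (crd u p)) = β at hB
  have hα : α ∈ F := by
    obtain ⟨s, hs1, hs2, hs3, hs4⟩ := hA.exists_seq_monotone_tendsto ⟨_, hvF, hvp'.le⟩
    exact leaf_limit_left hL u (fun n => (hs4 n).1) hs1 hs2 hs3
  have hβ : β ∈ F := by
    obtain ⟨s, hs1, hs2, hs3, hs4⟩ := hB.exists_seq_antitone_tendsto ⟨_, hwF, hpw'.le⟩
    exact leaf_limit_right hL u (fun n => (hs4 n).1) hs1 hs2 hs3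
  have hαp : α < crd u p :=
    lt_of_le_of_ne (hA.2 fun t ht => ht.2) fun h => hpF (h ▸ hα)
  have hpβ : crd u p < β :=
    lt_of_le_of_ne (hB.2 fun t ht => ht.2) fun h => hpF (h ▸ hβ)
  refine ⟨pt u α, pt u β, ⟨hα, hβ, ?_, ?_⟩, ?_, ?_⟩
  · rw [posOri_base (pt_ne u α) (pt_ne u β), crd_pt, crd_pt]
    exact hαp.trans hpβ
  · intro b hb h1 h2
    have hbu : b ≠ u := h2.1.symm
    rw [posOri_base (pt_ne u α) hbu, crd_pt] at h1
    rw [posOri_base hbu (pt_ne u β), crd_pt] at h2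
    have hbF : crd u b ∈ F := by rw [hF, mem_ofPred_eq, pt_crd hbu]; exact hb
    rcases le_total (crd u b) (crd u p) with h3 | h3
    · exact (hA.1 ⟨hbF, h3⟩).not_gt h1
    · exact (hB.1 ⟨hbF, h3⟩).not_gt h2
  · rw [crd_pt]
    exact hA.1 ⟨hvF, hvp'.le⟩
  · rw [crd_pt]
    exact hB.1 ⟨hwF, hpw'.le⟩

theorem Consec.map {L : Set (Set Circle)} {G : Subgroup (Circle ≃ₜ Circle)}
    (ho : ∀ g ∈ G, OrientPres g) (hinv : GInv G L) {g : Circle ≃ₜ Circle} (hg : g ∈ G)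
    {u x y : Circle} (h : Consec L u x y) : Consec L (g u) (g x) (g y) := by
  have him : ∀ k ∈ G, ∀ a b, oInt a b ∈ L → oInt (k a) (k b) ∈ L := by
    intro k hk a b hab
    rw [← image_oInt (ho k hk) (ho k.symm (G.inv_mem hk))]
    exact hinv k hk _ hab
  have hs := ho g.symm (G.inv_mem hg)
  refine ⟨him g hg _ _ h.left, him g hg _ _ h.right, ho g hg _ _ _ h.pos, ?_⟩
  intro b hb h1 h2
  have h3 := him g.symm (G.inv_mem hg) _ _ hb
  have h4 := hs _ _ _ h1
  have h5 := hs _ _ _ h2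
  rw [g.symm_apply_apply] at h3
  rw [g.symm_apply_apply, g.symm_apply_apply] at h4 h5
  exact h.none _ h3 h4 h5

/-- An element fixing the endpoint `u` of a leaf cannot move the other endpoint `v` forward.
Otherwise every point of the arc from `v` to `g v` is joined to `u` by a leaf of `L₁`, while `L₂`
also has an endpoint in that arc. -/
theorem not_moved_forward {L₁ L₂ : Set (Set Circle)} {G : Subgroup (Circle ≃ₜ Circle)}
    (hpf : PFib L₁ L₂ G) {u v : Circle} (hI : oInt u v ∈ L₁)
    {g : Circle ≃ₜ Circle} (hg : g ∈ G) (hu : g u = u) : ¬ posOri u v (g v) := by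
  intro hlt
  have hvu : v ≠ u := hlt.1.symm
  have hgvu : g v ≠ u := hlt.2.2.1
  have hgI : oInt u (g v) ∈ L₁ := by
    have := hpf.inv₁ g hg _ hI
    rwa [image_oInt (hpf.orient g hg) (hpf.orient g.symm (G.inv_mem hg)), hu] at this
  have hlt' := (posOri_base hvu hgvu).1 hlt
  have hall : ∀ p ∈ oInt v (g v), oInt u p ∈ L₁ := by
    intro p hp
    by_contra hpL
    obtain ⟨hpu, h1, h2⟩ := (posOri_crd hvu hgvu hlt').1 hp
    obtain ⟨x, y, hC, hx, hy⟩ := exists_consec hpf.lam₁ hI hgI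
      ((posOri_base hvu hpu).2 h1) ((posOri_base hpu hgvu).2 h2) hpL
    have hC' := hC.map hpf.orient hpf.inv₁ hg
    rw [hu] at hC'
    have hxu : x ≠ u := hC.pos.1.symm
    have hgxu : g x ≠ u := hC'.pos.1.symm
    have hxy := (posOri_base hxu hC.pos.2.2.1).1 hC.pos
    -- `v ≤ x < y ≤ g v ≤ g x` in the coordinate based at `u`
    have hgx : crd u (g v) ≤ crd u (g x) := by
      rcases hx.eq_or_lt with h | h
      · rw [crd_inj hvu hxu h]
      · have := hpf.orient g hg _ _ _ ((posOri_base hvu hxu).2 h)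
        rw [hu] at this
        exact ((posOri_base hgvu hgxu).1 this).le
    exact hC.not_lt hpf.lam₁ hpf.loose₁ hC' ((posOri_base hxu hgxu).2 (by linarith))
  obtain ⟨p, hp, hpE⟩ := exists_endpoint_mem hpf.lam₂ hpf.veryFull₂ hlt.2.1
  have hpu : p ≠ u := ((posOri_crd hvu hgvu hlt').1 hp).1
  have hpE₁ : p ∈ ELset L₁ := mem_biUnion (hall p hp) (right_mem_frontier hpu.symm)
  have : p ∈ ELset L₁ ∩ ELset L₂ := ⟨hpE₁, hpE⟩
  rw [hpf.disjEnds] at this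
  exact this

theorem fixes_other_endpoint {L₁ L₂ : Set (Set Circle)} {G : Subgroup (Circle ≃ₜ Circle)}
    (hpf : PFib L₁ L₂ G) {u v : Circle} (huv : u ≠ v) (hI : oInt u v ∈ L₁)
    {g : Circle ≃ₜ Circle} (hg : g ∈ G) (hu : g u = u) : g v = v := by
  by_contra hv
  have hgvu : g v ≠ u := fun h => huv (g.injective (hu.trans h.symm))
  have husymm : g.symm u = u := by rw [g.symm_apply_eq, hu]
  rcases lt_trichotomy (crd u v) (crd u (g v)) with h | h | h
  · exact not_moved_forward hpf hI hg hu ((posOri_base huv.symm hgvu).2 h)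
  · exact hv (crd_inj huv.symm hgvu h).symm
  · have h1 := hpf.orient g.symm (G.inv_mem hg) _ _ _ ((posOri_base hgvu huv.symm).2 h)
    rw [husymm, g.symm_apply_apply] at h1
    exact not_moved_forward hpf hI (G.inv_mem hg) husymm h1

/-- In a pseudo-fibered triple, for a leaf of `L₁` with endpoints `u, v` and `g ∈ G`,
either both endpoints are fixed by `g` or neither is. -/
theorem stmt18 (L₁ L₂ : Set (Set Circle)) (G : Subgroup (Circle ≃ₜ Circle))
    (hpf : PFib L₁ L₂ G) (u v : Circle) (huv : u ≠ v) (hI : oInt u v ∈ L₁)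
    (g : Circle ≃ₜ Circle) (hg : g ∈ G) :
    (g u = u ∧ g v = v) ∨ (g u ≠ u ∧ g v ≠ v) := by
  have hI' : oInt v u ∈ L₁ := by
    rw [← dual_oInt huv]
    exact hpf.lam₁.dualMem _ hI
  by_cases hu : g u = u
  · exact Or.inl ⟨hu, fixes_other_endpoint hpf huv hI hg hu⟩
  · exact Or.inr ⟨hu, fun hv => hu (fixes_other_endpoint hpf huv.symm hI' hg hv)⟩
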